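/- Let f : B → A be a homomorphism of commutative rings. The following are equivalent: (1) for every comodule (M, ρ) over the canonical coring, the counit map ζ_M : M^co ⊗_B A → M, ζ_M(m ⊗ a) = m·a, is bijective; (2) for every comodule (M, ρ) over the canonical coring, the map M^co ⊗_B A → M ⊗_B A induced by the inclusion M^co ⊆ M is injective and its image equals the equalizer of ρ ⊗ id_A and i_M ⊗ id_A : M ⊗_B A → M ⊗_B A ⊗_B A, where i_M(m) = m ⊗ 1 (i.e., the functor − ⊗_B A preserves the equalizer of ρ and i_M). -/

import Mathlib

open TensorProduct

universe u

noncomputable def unitMap (B A : Type u) [CommRing B] [CommRing A] [Algebra B A]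
    (N : Type u) [AddCommGroup N] [Module B N] : N →ₗ[B] N ⊗[B] A :=
  (TensorProduct.mk B N A).flip 1

/-- The action map `M ⊗_B A → M`, `m ⊗ a ↦ m · a`. -/
noncomputable def actionMap (B A : Type u) [CommRing B] [CommRing A] [Algebra B A]
    (M : Type u) [AddCommGroup M] [Module B M] [Module A M] [IsScalarTower B A M] :
    M ⊗[B] A →ₗ[B] M :=
  TensorProduct.lift (LinearMap.mk₂ B (fun m a => a • m)
    (fun m m' a => smul_add a m m')
    (fun b m a => smul_comm a b m)
    (fun m a a' => add_smul a a' m)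
    (fun b m a => smul_assoc b a m))

/-- `(M, ρ)` is a comodule over the canonical coring `A ⊗_B A`. -/
def IsCanComodule (B A : Type u) [CommRing B] [CommRing A] [Algebra B A]
    (M : Type u) [AddCommGroup M] [Module B M] [Module A M] [IsScalarTower B A M]
    (ρ : M →ₗ[B] M ⊗[B] A) : Prop :=
  (∀ (a : A) (m : M),
      ρ (a • m) = LinearMap.lTensor M (LinearMap.mulLeft B a) (ρ m)) ∧
  (∀ m : M, LinearMap.rTensor A ρ (ρ m) = LinearMap.rTensor A (unitMap B A M) (ρ m)) ∧
  (∀ m : M, actionMap B A M (ρ m) = m)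

/-- The coinvariants `M^co = {m : ρ m = m ⊗ 1}` as a `B`-submodule. -/
noncomputable def coinv (B A : Type u) [CommRing B] [CommRing A] [Algebra B A]
    (M : Type u) [AddCommGroup M] [Module B M] [Module A M] [IsScalarTower B A M]
    (ρ : M →ₗ[B] M ⊗[B] A) : Submodule B M where
  carrier := {m | ρ m = m ⊗ₜ[B] 1}
  add_mem' := by
    intro x y hx hy
    simp only [Set.mem_setOf_eq] at *
    rw [map_add, hx, hy, add_tmul]
  zero_mem' := by simp
  smul_mem' := by
    intro b m hm
    simp only [Set.mem_setOf_eq] at *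
    rw [map_smul, hm, smul_tmul']

/-- The counit map `ζ_M : M^co ⊗_B A → M`, `m ⊗ a ↦ m · a`. -/
noncomputable def counitMap (B A : Type u) [CommRing B] [CommRing A] [Algebra B A]
    (M : Type u) [AddCommGroup M] [Module B M] [Module A M] [IsScalarTower B A M]
    (ρ : M →ₗ[B] M ⊗[B] A) : (coinv B A M ρ) ⊗[B] A →ₗ[B] M :=
  actionMap B A M ∘ₗ LinearMap.rTensor A (coinv B A M ρ).subtype

/-!
For a comodule `(M, ρ)` the pair `ρ ⊗ A`, `i_M ⊗ A` has `ρ` as a split equalizer: the splittings are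
the action of `A` on `M` and the action of `A` on the induced module `M ⊗_B A`. So `ρ` is injective
with image the equalizer. Since the map `M^co ⊗_B A → M ⊗_B A` factors as `ρ ∘ ζ_M`, it is
injective with image the equalizer exactly when `ζ_M` is bijective.
-/

theorem bijective_iff_injective_comp_and_range_comp_eq {α β γ : Type*} {g : β → γ}
    (hg : Function.Injective g) (f : α → β) :
    Function.Bijective f ↔
      Function.Injective (g ∘ f) ∧ Set.range (g ∘ f) = Set.range g := by
  rw [Function.Bijective, hg.of_comp_iff, Set.range_comp, ← Set.image_univ (f := g),
    hg.image_injective.eq_iff, Set.range_eq_univ]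

section CanonicalCoring

variable {B A : Type u} [CommRing B] [CommRing A] [Algebra B A]
variable {M : Type u} [AddCommGroup M] [Module B M] [Module A M] [IsScalarTower B A M]
variable {N : Type u} [AddCommGroup N] [Module B N]

variable (B A N) in
/-- The action map `(n ⊗ a') ⊗ a ↦ n ⊗ a' * a` of the induced `A`-module `N ⊗_B A`. It
splits the pair `ρ ⊗ A`, `i_M ⊗ A` when `N = M`, and is written out on tensors because Mathlib has
no `A`-module instance on `N ⊗[B] A` through the right factor. -/
noncomputable def inducedActionMap : (N ⊗[B] A) ⊗[B] A →ₗ[B] N ⊗[B] A :=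
  LinearMap.lTensor N (LinearMap.mul' B A) ∘ₗ (TensorProduct.assoc B N A A).toLinearMap

theorem inducedActionMap_tmul (x : N ⊗[B] A) (a : A) :
    inducedActionMap B A N (x ⊗ₜ[B] a) = LinearMap.lTensor N (LinearMap.mulLeft B a) x := by
  induction x with
  | zero => simp only [zero_tmul, map_zero]
  | add x y hx hy => rw [add_tmul, map_add, map_add, hx, hy]
  | tmul n a' => simp [inducedActionMap, mul_comm]

theorem inducedActionMap_rTensor_unitMap (x : N ⊗[B] A) :
    inducedActionMap B A N (LinearMap.rTensor A (unitMap B A N) x) = x := by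
  have h : inducedActionMap B A N ∘ₗ LinearMap.rTensor A (unitMap B A N) = LinearMap.id := by
    ext n a
    simp [inducedActionMap, unitMap]
  exact LinearMap.congr_fun h x

theorem inducedActionMap_rTensor {ρ : M →ₗ[B] N ⊗[B] A}
    (hρ : ∀ (a : A) (m : M), ρ (a • m) = LinearMap.lTensor N (LinearMap.mulLeft B a) (ρ m))
    (x : M ⊗[B] A) :
    inducedActionMap B A N (LinearMap.rTensor A ρ x) = ρ (actionMap B A M x) := by
  have h : inducedActionMap B A N ∘ₗ LinearMap.rTensor A ρ = ρ ∘ₗ actionMap B A M := by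
    ext m a
    simp [inducedActionMap_tmul, actionMap, hρ]
  exact LinearMap.congr_fun h x

theorem comp_counitMap {ρ : M →ₗ[B] M ⊗[B] A}
    (hρ : ∀ (a : A) (m : M), ρ (a • m) = LinearMap.lTensor M (LinearMap.mulLeft B a) (ρ m)) :
    ρ ∘ₗ counitMap B A M ρ = LinearMap.rTensor A (coinv B A M ρ).subtype := by
  ext m a
  have hm : ρ m = (m : M) ⊗ₜ[B] 1 := m.2
  simp [counitMap, actionMap, hρ, hm]

theorem IsCanComodule.injective {ρ : M →ₗ[B] M ⊗[B] A} (h : IsCanComodule B A M ρ) :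
    Function.Injective ρ :=
  Function.LeftInverse.injective h.2.2

theorem IsCanComodule.range_eq_equalizer {ρ : M →ₗ[B] M ⊗[B] A} (h : IsCanComodule B A M ρ) :
    Set.range ρ =
      {x : M ⊗[B] A | LinearMap.rTensor A ρ x = LinearMap.rTensor A (unitMap B A M) x} := by
  obtain ⟨hlinear, hcoassoc, -⟩ := h
  refine Set.Subset.antisymm (Set.range_subset_iff.mpr hcoassoc) fun x hx ↦
    ⟨actionMap B A M x, ?_⟩
  calc ρ (actionMap B A M x)
    _ = inducedActionMap B A M (LinearMap.rTensor A ρ x) :=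
      (inducedActionMap_rTensor hlinear x).symm
    _ = inducedActionMap B A M (LinearMap.rTensor A (unitMap B A M) x) := congrArg _ hx
    _ = x := inducedActionMap_rTensor_unitMap x

end CanonicalCoring

theorem counit_bijective_iff_preserves_equalizer_general
    {B A : Type u} [CommRing B] [CommRing A] [Algebra B A]
    {M : Type u} [AddCommGroup M] [Module B M] [Module A M] [IsScalarTower B A M]
    {ρ : M →ₗ[B] M ⊗[B] A} (h : IsCanComodule B A M ρ) :
    Function.Bijective (counitMap B A M ρ) ↔
      Function.Injective (LinearMap.rTensor A (coinv B A M ρ).subtype) ∧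
        Set.range (LinearMap.rTensor A (coinv B A M ρ).subtype) =
          {x : M ⊗[B] A |
            LinearMap.rTensor A ρ x = LinearMap.rTensor A (unitMap B A M) x} := by
  rw [← h.range_eq_equalizer, ← comp_counitMap h.1, LinearMap.coe_comp]
  exact bijective_iff_injective_comp_and_range_comp_eq h.injective _

/-- The right adjoint of the comparison functor is fully faithful (i.e. every counit map
`ζ_M : M^co ⊗_B A → M` is bijective) if and only if `- ⊗_B A` preserves the equalizer of
`ρ` and `i_M` for every comodule `(M, ρ)` over the canonical coring. -/
theorem counit_bijective_iff_preserves_equalizer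
    (B A : Type u) [CommRing B] [CommRing A] [Algebra B A] :
    (∀ (M : Type u) [AddCommGroup M] [Module B M] [Module A M] [IsScalarTower B A M]
       (ρ : M →ₗ[B] M ⊗[B] A), IsCanComodule B A M ρ →
       Function.Bijective (counitMap B A M ρ)) ↔
    (∀ (M : Type u) [AddCommGroup M] [Module B M] [Module A M] [IsScalarTower B A M]
       (ρ : M →ₗ[B] M ⊗[B] A), IsCanComodule B A M ρ →
       (Function.Injective (LinearMap.rTensor A (coinv B A M ρ).subtype) ∧
        Set.range (LinearMap.rTensor A (coinv B A M ρ).subtype) =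
          {x : M ⊗[B] A |
            LinearMap.rTensor A ρ x = LinearMap.rTensor A (unitMap B A M) x})) := by
  refine ⟨fun H M _ _ _ _ ρ h ↦ ?_, fun H M _ _ _ _ ρ h ↦ ?_⟩
  · exact (counit_bijective_iff_preserves_equalizer_general h).mp (H M ρ h)
  · exact (counit_bijective_iff_preserves_equalizer_general h).mpr (H M ρ h)
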